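/- For every sentence J, the colored dual immaculate function expands positively into the colored monomial basis as 𝔖*_J = Σ_B K_{J,B} M_B, where the sum runs over all sentences B with |B| = |J| and K_{J,B} is the number of colored immaculate tableaux of shape J and type B. -/

import Mathlib

open scoped BigOperators

namespace ColoredImm

variable {A : Type*}

/-- A *weak sentence* over the alphabet `A`: a finite list of words (words may be empty). -/
abbrev Sentence (A : Type*) := List (List A)

/-- A genuine *sentence*: all of its words are nonempty. -/
def IsSentence (I : Sentence A) : Prop := ∀ w ∈ I, w ≠ []

/-- The size `|I|` of a sentence: its total number of letters. -/
def size (I : Sentence A) : ℕ := (I.map List.length).sum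

/-- The word lengths `wℓ(I)` of a sentence. -/
def wl (I : Sentence A) : List ℕ := I.map List.length

/-- The flattening of a weak sentence: delete all empty words. -/
def flattenWS (I : Sentence A) : Sentence A := I.filter (fun w => !w.isEmpty)

/-- `Refines J I` means `J ⪯ I`: the sentence `I` can be obtained by concatenating
some adjacent words of `J` (so `J` is a refinement of `I`, and `I` a coarsening of `J`). -/
def Refines (J I : Sentence A) : Prop :=
  ∃ P : List (Sentence A), (∀ p ∈ P, p ≠ []) ∧ P.flatten = J ∧ P.map List.flatten = I

/-! ### Fillings and colored immaculate tableaux -/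

/-- An integer filling of a diagram, recorded row by row. -/
abbrev Filling := List (List ℕ)

/-- The entry of a filling at box `b = (row, column)` (0-indexed), with default `0`. -/
def entryAt (f : Filling) (b : ℕ × ℕ) : ℕ := (f.getD b.1 []).getD b.2 0

/-- `IsCIT I f`: `f` is a colored immaculate tableau of shape `I`; that is, `f` has the
same shape as the colored composition diagram of `I`, its entries are positive integers
weakly increasing left to right along each row, and the entries in the first column are
strictly increasing from top to bottom. -/
def IsCIT (I : Sentence A) (f : Filling) : Prop :=
  f.map List.length = I.map List.length ∧
  (∀ row ∈ f, row.Chain' (· ≤ ·)) ∧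
  (f.filterMap List.head?).Chain' (· < ·) ∧
  (∀ x ∈ f.flatten, 1 ≤ x)

/-- The colors (letters of `w`) of the boxes of one row whose entry (in `row`) is `v`,
read from left to right. -/
def rowWith (w : List A) (row : List ℕ) (v : ℕ) : List A :=
  ((w.zip row).filter (fun p => p.2 == v)).map Prod.fst

/-- The word of the type of a tableau at value `v`: the colors of all boxes with entry `v`,
read left to right, from the bottom row up to the top row. -/
def typeWord (I : Sentence A) (f : Filling) (v : ℕ) : List A :=
  (((I.zip f).reverse).map (fun p => rowWith p.1 p.2 v)).flatten

/-- `HasType I f B` : the tableau `f` (of shape `I`) has type the weak sentence `B`,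
i.e. for every positive integer `v`, the colors of the boxes of `f` containing `v`
(read left to right, bottom to top) form the `v`-th word of `B`. -/
def HasType (I : Sentence A) (f : Filling) (B : Sentence A) : Prop :=
  ∀ v, 1 ≤ v → typeWord I f v = B.getD (v - 1) []

/-- `K_{J,B}`: the number of colored immaculate tableaux of shape `J` and type `B`. -/
noncomputable def KJB (J B : Sentence A) : ℕ :=
  Set.ncard {f : Filling | IsCIT J f ∧ HasType J f B}

/-! ### Standardization -/

/-- The list of boxes of a filling. -/
def boxes (f : Filling) : List (ℕ × ℕ) :=
  ((List.range f.length).map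
    (fun r => (List.range (f.getD r []).length).map (fun j => (r, j)))).flatten

/-- `beforeB f b b'`: box `b` comes strictly before box `b'` in the type-reading order of `f`
(smaller entries first; among equal entries, lower rows first, and within a row left to right). -/
def beforeB (f : Filling) (b b' : ℕ × ℕ) : Bool :=
  entryAt f b < entryAt f b' ||
    (entryAt f b == entryAt f b' && (b'.1 < b.1 || (b.1 == b'.1 && b.2 < b'.2)))

/-- The standardization of a filling: each box is renumbered (starting from `1`)
according to its position in the type-reading order. -/
def stdFill (f : Filling) : Filling :=
  (List.range f.length).map (fun r =>
    (List.range (f.getD r []).length).map (fun j =>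
      1 + ((boxes f).filter (fun b' => beforeB f b' (r, j))).length))

/-- The number of boxes of a filling. -/
def nBoxes (f : Filling) : ℕ := f.flatten.length

/-- A filling of `n` boxes is standard when its entries are exactly `1, …, n`,
each appearing once. -/
def IsStandardF (f : Filling) : Prop := f.flatten.Perm (List.range' 1 (nBoxes f))

/-! ### Descents and the colored descent composition -/

/-- The (0-indexed) row containing the value `v` in a standard filling. -/
def rowOf (f : Filling) (v : ℕ) : ℕ := f.findIdx (fun row => row.contains v)

/-- The sorted list of descents of a standard filling: those `i` with `1 ≤ i ≤ n-1`
such that `i+1` lies in a strictly lower row than `i`. -/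
def descList (f : Filling) : List ℕ :=
  (List.range' 1 (nBoxes f - 1)).filter (fun i => decide (rowOf f i < rowOf f (i + 1)))

/-- The composition of `n` associated to a set of split positions `d_1 < … < d_k`:
`(d_1, d_2 - d_1, …, n - d_k)`. -/
def compOf (ds : List ℕ) (n : ℕ) : List ℕ :=
  List.zipWith (fun a b => b - a) (0 :: ds) (ds ++ [n])

/-- Split a word into a sentence according to a composition. -/
def splitByComp : List A → List ℕ → List (List A)
  | _, [] => []
  | w, a :: rest => w.take a :: splitByComp (w.drop a) rest

/-- The color of the box containing the value `v` in a standard filling of shape `I`. -/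
def colorOf [Inhabited A] (I : Sentence A) (f : Filling) (v : ℕ) : A :=
  (I.getD (rowOf f v) []).getD ((f.getD (rowOf f v) []).findIdx (fun x => x == v)) default

/-- The maximal word of the colored descent composition of a standard filling of shape `I`:
the colors of its boxes read in the order of their integer entries. -/
def readWord [Inhabited A] (I : Sentence A) (f : Filling) : List A :=
  (List.range (nBoxes f)).map (fun i => colorOf I f (i + 1))

/-- The colored descent composition `co_A(U)` of a standard colored immaculate tableau:
read the colors of the boxes in the order of their entries, starting a new word
immediately after each descent. -/
def coA [Inhabited A] (I : Sentence A) (f : Filling) : Sentence A :=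
  if nBoxes f = 0 then [] else splitByComp (readWord I f) (compOf (descList f) (nBoxes f))

/-- `L_{J,C}`: the number of standard colored immaculate tableaux of shape `J`
with colored descent composition `C`. -/
noncomputable def LJC [Inhabited A] (J C : Sentence A) : ℕ :=
  Set.ncard {f : Filling | IsCIT J f ∧ IsStandardF f ∧ coA J f = C}

/-! ### The colored quasisymmetric functions `QSym_A` -/

/-- A (normal form of a) monomial in the partially commutative variables `x_{a,i}`:
a pair consisting of the list of words `(w_1, …, w_m)` and the list of (strictly
increasing, positive) second indices `(j_1 < … < j_m)`, representing
`x_{w_1,j_1} ⋯ x_{w_m,j_m}`. -/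
abbrev Mono (A : Type*) := List (List A) × List ℕ

/-- A colored quasisymmetric "series": a formal linear combination of monomials,
recorded by its coefficient function.  `QSym_A` itself is the span of the colored
monomial functions `MQ I` inside this space. -/
abbrev QSymA (A : Type*) := Mono A → ℚ

/-- Validity of a monomial normal form: words and indices match up, the indices are
strictly increasing positive integers, and all words are nonempty. -/
def ValidMono (m : Mono A) : Prop :=
  m.1.length = m.2.length ∧ m.2.Chain' (· < ·) ∧ (∀ j ∈ m.2, 1 ≤ j) ∧ ∀ w ∈ m.1, w ≠ []

open Classical in
/-- The colored monomial quasisymmetric function `M_I`: the sum of all monomials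
`x_{w_1,j_1} ⋯ x_{w_m,j_m}` with `j_1 < … < j_m`, where `I = (w_1, …, w_m)`. -/
noncomputable def MQ (I : Sentence A) : QSymA A := fun m =>
  if m.1 = I ∧ ValidMono m then 1 else 0

/-- The largest entry of a filling. -/
def maxEntry (f : Filling) : ℕ := f.flatten.foldr max 0

/-- The monomial `x_T` of a colored immaculate tableau `T = f` of shape `I`:
for `T` of type `B = (u_1, …, u_j)` it is `x_{u_1,1} x_{u_2,2} ⋯ x_{u_j,j}`
(empty words are skipped). -/
def monoOf (I : Sentence A) (f : Filling) : Mono A :=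
  let vs := ((List.range (maxEntry f)).map (· + 1)).filter (fun v => !(typeWord I f v).isEmpty)
  (vs.map (typeWord I f), vs)

/-- The colored dual immaculate function `𝔖*_J = Σ_T x_T`, the sum of the monomials of all
colored immaculate tableaux `T` of shape `J` (its coefficient at a monomial `m` is the
number of such tableaux with `x_T = m`). -/
noncomputable def dualImm (J : Sentence A) : QSymA A := fun m =>
  (Set.ncard {f : Filling | IsCIT J f ∧ monoOf J f = m} : ℚ)

/-- The colored fundamental quasisymmetric function `F_I = Σ_{J ⪯ I} M_J`. -/
noncomputable def FQ (I : Sentence A) : QSymA A :=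
  ∑ᶠ J ∈ {J : Sentence A | Refines J I}, MQ J

/-! ### The colored immaculate descent graph -/

/-- Edges of the colored immaculate descent graph: a directed edge from `I` to `J` (`J ≠ I`)
whenever some standard colored immaculate tableau of shape `I` has colored descent
composition `J`. -/
def IsEdge [Inhabited A] (I J : Sentence A) : Prop := J ≠ I ∧ LJC I J ≠ 0

/-- Directed paths from `I` to `K` in the colored immaculate descent graph, recorded by
their (nonempty) lists of successive vertices; the path `[I]` is the empty path at `I`. -/
def PathsFromTo [Inhabited A] (I K : Sentence A) : Set (List (Sentence A)) :=
  {p | p.head? = some I ∧ p.getLast? = some K ∧ p.Chain' IsEdge}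

/-- The signed weight `(-1)^{ℓ(𝒫)} prod(𝒫)` of a directed path `𝒫`:
`ℓ(𝒫)` is its number of edges and `prod(𝒫)` the product of its edge weights `L_{I,J}`. -/
noncomputable def pathWeight [Inhabited A] (p : List (Sentence A)) : ℚ :=
  ((-1 : ℚ)) ^ (p.length - 1) * ((p.zip p.tail).map (fun e => (LJC e.1 e.2 : ℚ))).prod

/-- `L⁻¹_{I,K} = Σ_𝒫 (-1)^{ℓ(𝒫)} prod(𝒫)`, summed over all directed paths `𝒫`
from `I` to `K` in the colored immaculate descent graph. -/
noncomputable def Linv [Inhabited A] (I K : Sentence A) : ℚ :=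
  ∑ᶠ p ∈ PathsFromTo I K, pathWeight p

/-! ### The colored noncommutative symmetric functions `NSym_A` -/

/-- A formal series over the complete homogeneous basis `{H_I}` of `NSym_A`, recorded by its
coefficient function on (weak) sentences.  `NSym_A` itself consists of the finitely
supported elements supported on genuine sentences; see `InNSym`. -/
abbrev NSymA (A : Type*) := Sentence A → ℚ

/-- Membership in `NSym_A` proper: finitely supported, and supported on genuine sentences. -/
def InNSym (f : NSymA A) : Prop :=
  (Function.support f).Finite ∧ ∀ I, f I ≠ 0 → IsSentence I

open Classical in
/-- The colored complete homogeneous noncommutative symmetric function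
`H_I = H_{w_1} ⋯ H_{w_k}`. -/
noncomputable def Hd (I : Sentence A) : NSymA A := fun J => if J = I then 1 else 0

/-- `H_w` for a single word `w`, with `H_∅ = 1`. -/
noncomputable def Hw (w : List A) : NSymA A := if w.isEmpty then Hd [] else Hd [w]

/-- Multiplication in `NSym_A` (the concatenation product, extended to series):
`H_I · H_J = H_{I ⬝ J}`. -/
def mulN (f g : NSymA A) : NSymA A := fun I =>
  ∑ j ∈ Finset.range (I.length + 1), f (I.take j) * g (I.drop j)

/-- The duality pairing `⟨·,·⟩ : NSym_A × QSym_A → ℚ`, determined by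
`⟨H_I, M_J⟩ = δ_{I,J}`: the `M_I`-coefficient of a quasisymmetric function is its
coefficient on the monomial `x_{w_1,1} x_{w_2,2} ⋯ x_{w_k,k}`. -/
noncomputable def pairNQ (G : NSymA A) (F : QSymA A) : ℚ :=
  ∑ᶠ I ∈ {I : Sentence A | IsSentence I}, G I * F (I, List.range' 1 I.length)

/-- All ways of splitting each word of a list of words into a prefix and a suffix. -/
def splitsOf : List (List A) → List (List (List A) × List (List A))
  | [] => [([], [])]
  | w :: ws =>
      (((splitsOf ws).map (fun p =>
        (List.range (w.length + 1)).map (fun t => (w.take t :: p.1, w.drop t :: p.2))))).flatten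

/-- Restriction of a candidate monomial: keep only the nonempty words together with
their indices. -/
def restrictMono (ws : List (List A)) (js : List ℕ) : Mono A :=
  let ps := (ws.zip js).filter (fun p => !p.1.isEmpty)
  (ps.map Prod.fst, ps.map Prod.snd)

/-- The product of colored quasisymmetric series: the coefficient of a monomial in `F·G`
is the sum, over all ways of writing each of its words as a concatenation of a word of a
monomial of `F` (on the left) and a word of a monomial of `G` (on the right), of the
products of the corresponding coefficients. -/
def mulQ (F G : QSymA A) : QSymA A := fun m =>
  ((splitsOf m.1).map (fun p => F (restrictMono p.1 m.2) * G (restrictMono p.2 m.2))).sum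

/-- The right perp operator `M^⊸` of `M ∈ QSym_A`, the linear operator on `NSym_A`
determined by `⟨M^⊸(H), G⟩ = ⟨H, G·M⟩`; explicitly, for the dual bases `{M_I}` and `{H_I}`,
`M^⊸(H) = Σ_I ⟨H, M_I · M⟩ H_I`. -/
noncomputable def rperp (M : QSymA A) (H : NSymA A) : NSymA A :=
  ∑ᶠ I ∈ {I : Sentence A | IsSentence I}, pairNQ H (mulQ (MQ I) M) • Hd I

/-- The colored noncommutative Bernstein operator
`𝔹_v = Σ_u Σ_{Q : w(Q^r) = u} (-1)^{ℓ(Q)} H_{v·u} · (Σ_{S ⪰ Q} M_S^⊸)`,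
where `Q` runs over all sentences, `u = w(Q^r)` is the concatenation of the words of `Q`
in reverse order, and `S` runs over all coarsenings of `Q`. -/
noncomputable def Bern (v : List A) (f : NSymA A) : NSymA A :=
  ∑ᶠ Q ∈ {Q : Sentence A | IsSentence Q},
    ((-1 : ℚ)) ^ Q.length •
      mulN (Hw (v ++ Q.reverse.flatten))
        (∑ᶠ S ∈ {S : Sentence A | Refines Q S}, rperp (MQ S) f)

/-- The colored immaculate function `𝔖_J = 𝔹_{v_1} 𝔹_{v_2} ⋯ 𝔹_{v_h}(1)`. -/
noncomputable def ImmS (J : Sentence A) : NSymA A := J.foldr Bern (Hd [])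

/-- The colored ribbon function `R_I = Σ_{J ⪰ I} (-1)^{ℓ(J) - ℓ(I)} H_J`. -/
noncomputable def Rib (I : Sentence A) : NSymA A :=
  ∑ᶠ J ∈ {J : Sentence A | Refines I J}, ((-1 : ℚ)) ^ (I.length - J.length) • Hd J

/-- The Pieri relation `J ⊂_w K` for a sentence `J = (v_1, …, v_h)` and a word `w`:
`K = (u_1, …, u_g)` with `h ≤ g ≤ h+1` (setting `v_{h+1} = ∅`) and `u_j = v_j · q_j`
for words `q_j` (possibly empty) whose reversed concatenation `q_g ⋯ q_1` equals `w`. -/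
def PieriRel (J : Sentence A) (w : List A) (K : Sentence A) : Prop :=
  J.length ≤ K.length ∧ K.length ≤ J.length + 1 ∧
  ∃ q : List (List A), q.length = K.length ∧ q.reverse.flatten = w ∧
    ∀ j < K.length, K.getD j [] = J.getD j [] ++ q.getD j []

/-- Right containment of a weak sentence `K` in `J`: same length, and each word of `K` is a
suffix of the corresponding word of `J`. -/
def RightContained (K J : Sentence A) : Prop :=
  K.length = J.length ∧ ∀ i < J.length, (K.getD i []).IsSuffix (J.getD i [])

/-- The weak sentence `J/_R K`: remove each word of `K` from the right end of the
corresponding word of `J`. -/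
def rightQuot (J K : Sentence A) : Sentence A :=
  List.zipWith (fun v u => v.take (v.length - u.length)) J K

/-- Left containment `J ⊆_L I`: `ℓ(J) ≤ ℓ(I)` and each word of `J` is a prefix of the
corresponding word of `I`. -/
def LeftContained (J I : Sentence A) : Prop :=
  J.length ≤ I.length ∧ ∀ i < J.length, (J.getD i []).IsPrefix (I.getD i [])

/-- A skew colored immaculate tableau of shape `I/J`: a filling of the active boxes
(the `i`-th row keeps the last `|w_i| - |v_i|` boxes) with positive integers, rows weakly
increasing left to right, and the entries in the (active part of the) first column of `I`
strictly increasing top to bottom. -/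
def IsSkewCIT (I J : Sentence A) (f : Filling) : Prop :=
  f.map List.length =
    (List.range I.length).map (fun i => (I.getD i []).length - (J.getD i []).length) ∧
  (∀ row ∈ f, row.Chain' (· ≤ ·)) ∧
  ((List.range I.length).filterMap
    (fun i => if (J.getD i []).length = 0 then (f.getD i []).head? else none)).Chain' (· < ·) ∧
  (∀ x ∈ f.flatten, 1 ≤ x)

/-- The word of the type of a skew tableau at value `v`: the colors of the active boxes with
entry `v`, read left to right, bottom to top. -/
def skewTypeWord (I J : Sentence A) (f : Filling) (v : ℕ) : List A :=
  (((List.range I.length).reverse).map (fun i =>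
    rowWith ((I.getD i []).drop (J.getD i []).length) (f.getD i []) v)).flatten

/-- `SkewHasType I J f K` : the skew tableau `f` of shape `I/J` has type `K`. -/
def SkewHasType (I J : Sentence A) (f : Filling) (K : Sentence A) : Prop :=
  ∀ v, 1 ≤ v → skewTypeWord I J f v = K.getD (v - 1) []

/-! ### The complement involution `ψ` and the row-strict functions -/

/-- The complement `I^c` of a sentence: the unique sentence with the same maximal word
that splits exactly where `I` does not. -/
def complSent (I : Sentence A) : Sentence A :=
  let w := I.flatten
  let n := w.length
  if n = 0 then []
  else
    let splits := (((wl I).scanl (· + ·) 0).drop 1).dropLast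
    let csplits := (List.range' 1 (n - 1)).filter (fun i => !(splits.contains i))
    splitByComp w (compOf csplits n)

/-- The `M_I`-coefficient of a colored quasisymmetric function. -/
noncomputable def coeffM (G : QSymA A) (I : Sentence A) : ℚ := G (I, List.range' 1 I.length)

/-- The image of `M_I` under `ψ`, via `M_I = Σ_{J ⪯ I} (-1)^{ℓ(J)-ℓ(I)} F_J` and
`ψ(F_J) = F_{J^c}`. -/
noncomputable def psiM (I : Sentence A) : QSymA A :=
  ∑ᶠ J ∈ {J : Sentence A | Refines J I}, ((-1 : ℚ)) ^ (J.length - I.length) • FQ (complSent J)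

/-- The linear involution `ψ` of `QSym_A`, determined by `ψ(F_I) = F_{I^c}`. -/
noncomputable def psiQ (G : QSymA A) : QSymA A :=
  ∑ᶠ I ∈ {I : Sentence A | IsSentence I}, coeffM G I • psiM I

/-- A colored row-strict immaculate tableau of shape `I`: entries strictly increase left to
right along each row and weakly increase top to bottom down the first column. -/
def IsCRSIT (I : Sentence A) (f : Filling) : Prop :=
  f.map List.length = I.map List.length ∧
  (∀ row ∈ f, row.Chain' (· < ·)) ∧
  (f.filterMap List.head?).Chain' (· ≤ ·) ∧
  (∀ x ∈ f.flatten, 1 ≤ x)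

/-- The word of the type of a row-strict tableau at value `v`: the colors of the boxes with
entry `v`, read left to right, top to bottom. -/
def rsTypeWord (I : Sentence A) (f : Filling) (v : ℕ) : List A :=
  ((I.zip f).map (fun p => rowWith p.1 p.2 v)).flatten

/-- The monomial `x_T` of a colored row-strict immaculate tableau. -/
def rsMonoOf (I : Sentence A) (f : Filling) : Mono A :=
  let vs := ((List.range (maxEntry f)).map (· + 1)).filter (fun v => !(rsTypeWord I f v).isEmpty)
  (vs.map (rsTypeWord I f), vs)

/-- The colored row-strict dual immaculate function `ℛ𝔖*_J = Σ_T x_T`, summed over all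
colored row-strict immaculate tableaux `T` of shape `J`. -/
noncomputable def rsDualImm (J : Sentence A) : QSymA A := fun m =>
  (Set.ncard {f : Filling | IsCRSIT J f ∧ rsMonoOf J f = m} : ℚ)

/-- `α ⪰ β` in the reverse lexicographic order on compositions: at the first index where
they differ, `α` has the *smaller* entry (padding with zeros). -/
def RevLexGE (α β : List ℕ) : Prop :=
  α = β ∨ ∃ i, (∀ j < i, α.getD j 0 = β.getD j 0) ∧ α.getD i 0 < β.getD i 0

/-! ### Uncolored (ordinary) versions, for `QSym` -/

namespace Uncolored

/-- A composition: a list of positive integers. -/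
def IsComposition (α : List ℕ) : Prop := ∀ a ∈ α, 1 ≤ a

/-- `β ⪯ α`: the composition `α` is obtained by summing adjacent parts of `β`. -/
def RefinesC (β α : List ℕ) : Prop :=
  ∃ P : List (List ℕ), (∀ p ∈ P, p ≠ []) ∧ P.flatten = β ∧ P.map List.sum = α

/-- A monomial `x_{i_1}^{a_1} ⋯ x_{i_m}^{a_m}` recorded by its exponents and its
strictly increasing positive indices. -/
abbrev MonoU := List ℕ × List ℕ

/-- A quasisymmetric "series", recorded by its coefficient function on monomials.
`QSym` is the span of the monomial functions `MU α` inside this space. -/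
abbrev QSymU := MonoU → ℚ

/-- Validity of a monomial: matching lengths, strictly increasing positive indices,
positive exponents. -/
def ValidMonoU (m : MonoU) : Prop :=
  m.1.length = m.2.length ∧ m.2.Chain' (· < ·) ∧ (∀ j ∈ m.2, 1 ≤ j) ∧ ∀ a ∈ m.1, 1 ≤ a

open Classical in
/-- The monomial quasisymmetric function `M_α`. -/
noncomputable def MU (α : List ℕ) : QSymU := fun m =>
  if m.1 = α ∧ ValidMonoU m then 1 else 0

/-- The fundamental quasisymmetric function `F_α = Σ_{β ⪯ α} M_β`. -/
noncomputable def FU (α : List ℕ) : QSymU :=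
  ∑ᶠ β ∈ {β : List ℕ | RefinesC β α}, MU β

/-- An immaculate tableau of shape `α`: positive integer entries, rows weakly increasing
left to right, first column strictly increasing top to bottom. -/
def IsIT (α : List ℕ) (f : Filling) : Prop :=
  f.map List.length = α ∧
  (∀ row ∈ f, row.Chain' (· ≤ ·)) ∧
  (f.filterMap List.head?).Chain' (· < ·) ∧
  (∀ x ∈ f.flatten, 1 ≤ x)

/-- The number of boxes of `f` with entry `v`. -/
def countOf (f : Filling) (v : ℕ) : ℕ := (f.flatten.filter (fun x => x == v)).length

/-- The monomial `x^T` of an immaculate tableau `T` of type `β`: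
`x_1^{β_1} ⋯ x_h^{β_h}` (zero exponents skipped). -/
def monoOfU (f : Filling) : MonoU :=
  let vs := ((List.range (maxEntry f)).map (· + 1)).filter (fun v => decide (countOf f v ≠ 0))
  (vs.map (countOf f), vs)

/-- The dual immaculate function `𝔖*_α = Σ_T x^T`, summed over all immaculate tableaux
of shape `α`. -/
noncomputable def dualImmU (α : List ℕ) : QSymU := fun m =>
  (Set.ncard {f : Filling | IsIT α f ∧ monoOfU f = m} : ℚ)

/-- The descent composition `co(U)` of a standard immaculate tableau. -/
def descComp (f : Filling) : List ℕ :=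
  if nBoxes f = 0 then [] else compOf (descList f) (nBoxes f)

/-- `L_{α,β}`: the number of standard immaculate tableaux of shape `α` with descent
composition `β`. -/
noncomputable def LU (α β : List ℕ) : ℕ :=
  Set.ncard {f : Filling | IsIT α f ∧ IsStandardF f ∧ descComp f = β}

/-- Edges of the immaculate descent graph `𝔇^n`. -/
def IsEdgeU (α β : List ℕ) : Prop := β ≠ α ∧ LU α β ≠ 0

/-- Directed paths from `α` to `β` in the immaculate descent graph, recorded by their
lists of successive vertices; `[α]` is the empty path at `α`. -/
def PathsU (α β : List ℕ) : Set (List (List ℕ)) :=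
  {p | p.head? = some α ∧ p.getLast? = some β ∧ p.Chain' IsEdgeU}

/-- The signed weight `(-1)^{ℓ(𝒫)} prod(𝒫)` of a path. -/
noncomputable def pathWeightU (p : List (List ℕ)) : ℚ :=
  ((-1 : ℚ)) ^ (p.length - 1) * ((p.zip p.tail).map (fun e => (LU e.1 e.2 : ℚ))).prod

/-- `L⁻¹_{α,β} = Σ_𝒫 (-1)^{ℓ(𝒫)} prod(𝒫)`, over directed paths from `α` to `β` in `𝔇^n`. -/
noncomputable def LinvU (α β : List ℕ) : ℚ :=
  ∑ᶠ p ∈ PathsU α β, pathWeightU p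

end Uncolored

end ColoredImm

namespace ColoredImm

/-! ### Helper lemmas -/

theorem typeWord_cons (w : List A) (I : Sentence A) (r : List ℕ) (f : Filling) (v : ℕ) :
    typeWord (w :: I) (r :: f) v = typeWord I f v ++ rowWith w r v := by
  simp [typeWord]

theorem rowWith_length (w : List A) (r : List ℕ) (v : ℕ) (h : r.length = w.length) :
    (rowWith w r v).length = r.count v := by
  induction r generalizing w with
  | nil => simp [rowWith]
  | cons a r ih =>
    cases w with
    | nil => simp at h
    | cons b w =>
      have := ih w (by simpa using h)
      simp only [rowWith, List.length_map] at this
      by_cases hav : a = v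
      · simp [rowWith, hav, this]
      · simp [rowWith, hav, this]

theorem typeWord_length (I : Sentence A) (f : Filling) (v : ℕ)
    (h : f.map List.length = I.map List.length) :
    (typeWord I f v).length = f.flatten.count v := by
  induction I generalizing f with
  | nil =>
    cases f with
    | nil => simp [typeWord]
    | cons r f => simp at h
  | cons w I ih =>
    cases f with
    | nil => simp at h
    | cons r f =>
      simp only [List.map_cons, List.cons.injEq] at h
      rw [typeWord_cons, List.length_append, ih f h.2, rowWith_length w r v h.1]
      simp [List.count_append, Nat.add_comm]

theorem typeWord_ne_nil_iff (I : Sentence A) (f : Filling) (v : ℕ)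
    (h : f.map List.length = I.map List.length) :
    typeWord I f v ≠ [] ↔ v ∈ f.flatten := by
  rw [← List.length_pos_iff, typeWord_length I f v h, List.count_pos_iff]

theorem rowWith_map (w : List A) (r : List ℕ) (v : ℕ) (φ : ℕ → ℕ) (hφ : Function.Injective φ) :
    rowWith w (r.map φ) (φ v) = rowWith w r v := by
  induction r generalizing w with
  | nil => simp [rowWith]
  | cons a r ih =>
    cases w with
    | nil => simp [rowWith]
    | cons b w =>
      have := ih w
      simp only [rowWith] at this
      by_cases hav : a = v
      · simp [rowWith, hav, this]
      · have h2 : φ a ≠ φ v := fun h => hav (hφ h)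
        simp [rowWith, hav, h2, this]

theorem typeWord_map (I : Sentence A) (f : Filling) (v : ℕ) (φ : ℕ → ℕ)
    (hφ : Function.Injective φ) :
    typeWord I (f.map (List.map φ)) (φ v) = typeWord I f v := by
  induction I generalizing f with
  | nil => simp [typeWord]
  | cons w I ih =>
    cases f with
    | nil => simp [typeWord]
    | cons r f => rw [List.map_cons, typeWord_cons, typeWord_cons, ih, rowWith_map _ _ _ _ hφ]

theorem le_maxEntry (f : Filling) (x : ℕ) (hx : x ∈ f.flatten) : x ≤ maxEntry f := by
  unfold maxEntry
  generalize f.flatten = l at hx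
  induction l with
  | nil => simp at hx
  | cons a l ih =>
    simp only [List.foldr_cons]
    rcases List.mem_cons.1 hx with h | h
    · omega
    · have := ih h
      omega

/-- The list of values used by a tableau. -/
def valsOf (I : Sentence A) (f : Filling) : List ℕ :=
  ((List.range (maxEntry f)).map (· + 1)).filter (fun v => !(typeWord I f v).isEmpty)

theorem monoOf_eq (I : Sentence A) (f : Filling) :
    monoOf I f = ((valsOf I f).map (typeWord I f), valsOf I f) := rfl

theorem mem_valsOf (I : Sentence A) (f : Filling) (v : ℕ) (h : IsCIT I f) :
    v ∈ valsOf I f ↔ v ∈ f.flatten := by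
  rw [← typeWord_ne_nil_iff I f v h.1]
  simp only [valsOf, List.mem_filter, List.mem_map, List.mem_range]
  constructor
  · rintro ⟨-, h2⟩ h3
    simp [h3] at h2
  · intro h2
    have hm := (typeWord_ne_nil_iff I f v h.1).1 h2
    have h1 := h.2.2.2 v hm
    have h3 := le_maxEntry f v hm
    exact ⟨⟨v - 1, by omega, by omega⟩, by simpa using h2⟩

theorem valsOf_pairwise (I : Sentence A) (f : Filling) : (valsOf I f).Pairwise (· < ·) := by
  refine List.Pairwise.filter _ ?_
  rw [List.pairwise_map]
  exact List.pairwise_lt_range.imp (by intro a b h; omega)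

theorem validMono_monoOf (I : Sentence A) (f : Filling) (h : IsCIT I f) :
    ValidMono (monoOf I f) := by
  rw [monoOf_eq]
  refine ⟨by simp, List.isChain_iff_pairwise.2 (valsOf_pairwise I f), ?_, ?_⟩
  · intro j hj
    exact h.2.2.2 j ((mem_valsOf I f j h).1 hj)
  · intro w hw
    obtain ⟨v, hv, rfl⟩ := List.mem_map.1 hw
    exact (typeWord_ne_nil_iff I f v h.1).2 ((mem_valsOf I f v h).1 hv)

theorem valsOf_eq_iff (I : Sentence A) (f : Filling) (h : IsCIT I f) (js : List ℕ)
    (hjs : js.Pairwise (· < ·)) :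
    valsOf I f = js ↔ ∀ v, v ∈ f.flatten ↔ v ∈ js := by
  constructor
  · rintro rfl v
    exact (mem_valsOf I f v h).symm
  · intro hv
    refine List.Pairwise.eq_of_mem_iff (valsOf_pairwise I f) hjs ?_
    intro v
    rw [mem_valsOf I f v h, hv]

theorem size_monoOf (I : Sentence A) (f : Filling) (h : IsCIT I f) :
    size (monoOf I f).1 = size I := by
  rw [monoOf_eq]
  have h1 : size I = f.flatten.length := by
    rw [size, ← h.1, List.length_flatten]
  have h2 : List.map List.length ((valsOf I f).map (typeWord I f))
      = (valsOf I f).map (fun v => f.flatten.count v) := by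
    rw [List.map_map]
    refine List.map_congr_left ?_
    intro v _
    exact typeWord_length I f v h.1
  have hnd : (valsOf I f).Nodup := (valsOf_pairwise I f).imp (fun h => Nat.ne_of_lt h)
  have h3 : (valsOf I f).toFinset = f.flatten.toFinset := by
    ext v
    simp only [List.mem_toFinset]
    exact mem_valsOf I f v h
  rw [h1]
  show (List.map List.length ((valsOf I f).map (typeWord I f))).sum = _
  rw [h2, ← List.sum_toFinset _ hnd, h3, List.sum_toFinset_count_eq_length]

theorem hasType_iff (J B : Sentence A) (hB : IsSentence B) (f : Filling) (h : IsCIT J f) :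
    HasType J f B ↔ monoOf J f = (B, List.range' 1 B.length) := by
  rw [monoOf_eq, Prod.mk.injEq]
  constructor
  · intro ht
    have hv : valsOf J f = List.range' 1 B.length := by
      rw [valsOf_eq_iff J f h _ List.pairwise_lt_range']
      intro v
      rw [← typeWord_ne_nil_iff J f v h.1, List.mem_range'_1]
      constructor
      · intro hne
        have h1 := h.2.2.2 v ((typeWord_ne_nil_iff J f v h.1).1 hne)
        refine ⟨h1, ?_⟩
        by_contra hlt
        apply hne
        rw [ht v h1, List.getD_eq_default]
        omega
      · rintro ⟨h1, h2⟩
        have hlt : v - 1 < B.length := by omega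
        rw [ht v h1, List.getD_eq_getElem _ _ hlt]
        exact hB _ (List.getElem_mem hlt)
    refine ⟨?_, hv⟩
    rw [hv]
    apply List.ext_getElem
    · simp
    · intro i h1 h2
      simp only [List.getElem_map, List.getElem_range']
      rw [ht _ (by omega)]
      have e : 1 + 1 * i - 1 = i := by omega
      rw [e, List.getD_eq_getElem _ _ h2]
  · rintro ⟨h1, h2⟩ v hv
    rw [h2] at h1
    by_cases hlt : v - 1 < B.length
    · rw [List.getD_eq_getElem _ _ hlt]
      have : B[v - 1] = ((List.range' 1 B.length).map (typeWord J f))[v - 1]'(by simpa using hlt) := by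
        simp only [h1]
      rw [this]
      simp only [List.getElem_map, List.getElem_range']
      congr 1
      omega
    · rw [List.getD_eq_default _ _ (by omega)]
      by_contra hne
      have hm := (typeWord_ne_nil_iff J f v h.1).1 hne
      rw [← mem_valsOf J f v h, h2, List.mem_range'_1] at hm
      omega

theorem isCIT_map (J : Sentence A) (f : Filling) (φ : ℕ → ℕ) (hφ : StrictMono φ)
    (h0 : φ 0 = 0) : IsCIT J (f.map (List.map φ)) ↔ IsCIT J f := by
  have hpos : ∀ x, 1 ≤ φ x ↔ 1 ≤ x := by
    intro x
    have := hφ.lt_iff_lt (a := 0) (b := x)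
    rw [h0] at this
    exact this
  have e1 : (f.map (List.map φ)).map List.length = f.map List.length := by
    simp [Function.comp_def]
  have e2 : (f.map (List.map φ)).filterMap List.head? = (f.filterMap List.head?).map φ := by
    rw [List.filterMap_map, List.map_filterMap]
    congr 1
    funext r
    cases r <;> simp
  have e3 : (f.map (List.map φ)).flatten = f.flatten.map φ := by
    rw [List.map_flatten]
  unfold IsCIT
  rw [e1, e2, e3]
  refine and_congr Iff.rfl (and_congr ?_ (and_congr ?_ ?_))
  · simp only [List.forall_mem_map]
    refine forall₂_congr fun r _ => ?_
    refine (List.isChain_map φ).trans ?_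
    simp only [hφ.le_iff_le]
    exact Iff.rfl
  · refine (List.isChain_map φ).trans ?_
    simp only [hφ.lt_iff_lt]
    exact Iff.rfl
  · simp only [List.forall_mem_map, hpos]

theorem valsOf_map (J : Sentence A) (f : Filling) (φ : ℕ → ℕ) (hφ : StrictMono φ)
    (h0 : φ 0 = 0) (h : IsCIT J f) :
    valsOf J (f.map (List.map φ)) = (valsOf J f).map φ := by
  rw [valsOf_eq_iff J _ ((isCIT_map J f φ hφ h0).2 h)]
  · intro v
    rw [← List.map_flatten, List.mem_map, List.mem_map]
    simp only [mem_valsOf J f _ h]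
  · rw [List.pairwise_map]
    exact (valsOf_pairwise J f).imp (fun hab => hφ hab)

theorem monoOf_map (J : Sentence A) (f : Filling) (φ : ℕ → ℕ) (hφ : StrictMono φ)
    (h0 : φ 0 = 0) (h : IsCIT J f) :
    monoOf J (f.map (List.map φ)) = ((monoOf J f).1, (monoOf J f).2.map φ) := by
  rw [monoOf_eq, monoOf_eq, valsOf_map J f φ hφ h0 h, List.map_map]
  congr 1
  refine List.map_congr_left ?_
  intro v _
  exact typeWord_map J f v φ hφ.injective

theorem exists_strictMono (js : List ℕ) (hjs : js.Pairwise (· < ·)) (hpos : ∀ j ∈ js, 1 ≤ j) :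
    ∃ φ : ℕ → ℕ, StrictMono φ ∧ φ 0 = 0 ∧ (List.range' 1 js.length).map φ = js := by
  refine ⟨fun i => if i = 0 then 0 else if h : i - 1 < js.length then js[i - 1] else js.sum + i,
    ?_, by simp, ?_⟩
  · refine strictMono_nat_of_lt_succ ?_
    intro i
    rcases i with _ | i
    · by_cases h : 0 < js.length
      · simp [h]
        exact hpos _ (List.getElem_mem h)
      · simp [h]
    · by_cases h : i + 1 < js.length
      · have h' : i < js.length := by omega
        simp [h, h']
        exact List.pairwise_iff_getElem.1 hjs i (i + 1) h' h (by omega)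
      · by_cases h' : i < js.length
        · simp [h, h']
          have := List.le_sum_of_mem (List.getElem_mem h')
          omega
        · simp [h, h']
  · apply List.ext_getElem
    · simp
    · intro i h1 h2
      simp [h2, Nat.add_comm 1]

theorem ncard_eq (J B : Sentence A) (js : List ℕ) (hv : ValidMono (B, js)) :
    Set.ncard {f : Filling | IsCIT J f ∧ monoOf J f = (B, js)} = KJB J B := by
  obtain ⟨hlen, hch, hpos, hB⟩ := hv
  obtain ⟨φ, hφ, h0, hmap⟩ := exists_strictMono js (List.isChain_iff_pairwise.1 hch) hpos
  have hinj : Function.Injective (fun f : Filling => f.map (List.map φ)) :=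
    List.map_injective_iff.2 (List.map_injective_iff.2 hφ.injective)
  simp only at hlen
  rw [KJB, ← Set.ncard_image_of_injective {f : Filling | IsCIT J f ∧ HasType J f B} hinj]
  congr 1
  ext g
  simp only [Set.mem_ofPred_eq, Set.mem_image]
  constructor
  · rintro ⟨hg, hm⟩
    have hin : ∀ r ∈ g, r ∈ Set.range (List.map φ) := by
      intro r hr
      rw [Set.range_list_map]
      intro x hx
      have hx' : x ∈ valsOf J g :=
        (mem_valsOf J g x hg).2 (List.mem_flatten.2 ⟨r, hr, hx⟩)
      have : valsOf J g = js := congrArg Prod.snd hm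
      rw [this, ← hmap] at hx'
      obtain ⟨y, -, hy⟩ := List.mem_map.1 hx'
      exact ⟨y, hy⟩
    have : g ∈ Set.range (List.map (List.map φ)) := by
      rw [Set.range_list_map]
      exact hin
    obtain ⟨f, rfl⟩ := this
    have hf := (isCIT_map J f φ hφ h0).1 hg
    refine ⟨f, ⟨hf, ?_⟩, rfl⟩
    rw [hasType_iff J B hB f hf]
    rw [monoOf_map J f φ hφ h0 hf, Prod.mk.injEq] at hm
    refine Prod.ext hm.1 ?_
    apply List.map_injective_iff.2 hφ.injective
    rw [hm.2, hlen, hmap]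
  · rintro ⟨f, ⟨hf, ht⟩, rfl⟩
    refine ⟨(isCIT_map J f φ hφ h0).2 hf, ?_⟩
    rw [hasType_iff J B hB f hf] at ht
    rw [monoOf_map J f φ hφ h0 hf, ht, hlen, hmap]

theorem finite_lists {α : Type*} (S : Set α) (hS : S.Finite) (k : ℕ) :
    {l : List α | l.length ≤ k ∧ ∀ x ∈ l, x ∈ S}.Finite := by
  induction k with
  | zero =>
    refine (Set.finite_singleton ([] : List α)).subset ?_
    rintro l ⟨hl, -⟩
    simpa using hl
  | succ k ih =>
    refine ((Set.finite_singleton ([] : List α)).union (hS.image2 List.cons ih)).subset ?_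
    rintro l ⟨hl, hx⟩
    cases l with
    | nil => simp
    | cons a l =>
      right
      exact ⟨a, hx a (by simp), l, ⟨by simpa using hl, fun x h => hx x (by simp [h])⟩, rfl⟩

theorem length_le_size (B : Sentence A) (hB : IsSentence B) : B.length ≤ size B := by
  induction B with
  | nil => simp
  | cons w B ih =>
    have h1 := ih (fun u hu => hB u (by simp [hu]))
    have h2 := List.length_pos_iff.2 (hB w (by simp))
    simp only [size, List.map_cons, List.sum_cons, List.length_cons] at *
    omega

theorem exists_of_KJB_ne_zero (J B : Sentence A) (hB : IsSentence B) (h : KJB J B ≠ 0) :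
    ∃ f, IsCIT J f ∧ monoOf J f = (B, List.range' 1 B.length) := by
  obtain ⟨f, hf, ht⟩ := Set.nonempty_of_ncard_ne_zero h
  exact ⟨f, hf, (hasType_iff J B hB f hf).1 ht⟩

theorem finite_support_K (J : Sentence A) :
    {B : Sentence A | IsSentence B ∧ KJB J B ≠ 0}.Finite := by
  have hfin := finite_lists _ (finite_lists _ (Set.finite_Iic (size J)) (size J)) J.length
  refine (hfin.image (fun f => (monoOf J f).1)).subset ?_
  rintro B ⟨hB, hK⟩
  obtain ⟨f, hf, hm⟩ := exists_of_KJB_ne_zero J B hB hK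
  refine ⟨f, ⟨?_, ?_⟩, congrArg Prod.fst hm⟩
  · have := congrArg List.length hf.1
    simp only [List.length_map] at this
    exact this.le
  · intro r hr
    refine ⟨?_, ?_⟩
    · rw [size, ← hf.1]
      exact List.le_sum_of_mem (List.mem_map_of_mem hr)
    · intro x hx
      have hx' : x ∈ valsOf J f :=
        (mem_valsOf J f x hf).2 (List.mem_flatten.2 ⟨r, hr, hx⟩)
      have h1 : valsOf J f = List.range' 1 B.length := congrArg Prod.snd hm
      rw [h1, List.mem_range'_1] at hx'
      have h2 := length_le_size B hB
      have h3 := size_monoOf J f hf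
      rw [hm] at h3
      simp only at h3
      show x ≤ size J
      omega

/-- The colored dual immaculate function expands positively into the
colored monomial basis: `𝔖*_J = Σ_B K_{J,B} M_B`, summed over all sentences `B` with
`|B| = |J|`. -/
theorem statement3 {A : Type*} (J : Sentence A) (hJ : IsSentence J) :
    dualImm J =
      ∑ᶠ B ∈ {B : Sentence A | IsSentence B ∧ size B = size J}, (KJB J B : ℚ) • MQ B := by
  classical
  funext m
  rw [finsum_mem_def, finsum_apply]
  · rw [finsum_eq_single _ m.1]
    · by_cases hv : ValidMono m
      · have hc := ncard_eq J m.1 m.2 hv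
        have hB : IsSentence m.1 := hv.2.2.2
        have hd : dualImm J m = (KJB J m.1 : ℚ) := by
          rw [← hc]
          rfl
        rw [hd]
        by_cases hK : KJB J m.1 = 0
        · by_cases hs : size m.1 = size J
          · rw [Set.indicator_of_mem (show m.1 ∈ {B : Sentence A | IsSentence B ∧ size B = size J} from ⟨hB, hs⟩)]
            simp [hK]
          · rw [Set.indicator_of_notMem (fun h => hs h.2)]
            simp [hK]
        · obtain ⟨f, hf, hm⟩ := exists_of_KJB_ne_zero J m.1 hB hK
          have hs : size m.1 = size J := by
            have := size_monoOf J f hf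
            rwa [hm] at this
          rw [Set.indicator_of_mem (show m.1 ∈ {B : Sentence A | IsSentence B ∧ size B = size J} from ⟨hB, hs⟩)]
          simp [MQ, hv]
      · have hL : dualImm J m = 0 := by
          have : {f : Filling | IsCIT J f ∧ monoOf J f = m} = ∅ := by
            ext f
            simp only [Set.mem_ofPred_eq, Set.mem_empty_iff_false, iff_false]
            rintro ⟨hf, rfl⟩
            exact hv (validMono_monoOf J f hf)
          simp [dualImm, this]
        rw [hL]
        by_cases hs : m.1 ∈ {B : Sentence A | IsSentence B ∧ size B = size J}
        · rw [Set.indicator_of_mem hs]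
          simp [MQ, hv]
        · rw [Set.indicator_of_notMem hs]
          rfl
    · intro B hne
      by_cases hs : B ∈ {B : Sentence A | IsSentence B ∧ size B = size J}
      · rw [Set.indicator_of_mem hs]
        simp [MQ, hne.symm]
      · rw [Set.indicator_of_notMem hs]
        rfl
  · refine (finite_support_K J).subset ?_
    intro B hB
    rw [Function.mem_support] at hB
    by_cases hs : B ∈ {B : Sentence A | IsSentence B ∧ size B = size J}
    · refine ⟨hs.1, ?_⟩
      intro hK
      apply hB
      rw [Set.indicator_of_mem hs, hK]
      simp
    · exact absurd (Set.indicator_of_notMem hs _) hB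

end ColoredImm
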